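/- (Fixed-point characterization of the Rényi-divergence minimizer) Fix α ∈ (0,1), a finite alphabet X, a distribution P on X, and positive definite density matrices (W_x)_{x∈X} on ℂ^d. A density matrix σ minimizes σ ↦ Σ_x P(x) D_α(W_x‖σ) over S(ℂ^d) if and only if σ is proportional to (Σ_x P(x) W_x^α / Tr[W_x^α σ^{1-α}])^{1/α}, i.e. σ = N^{-1} (Σ_x P(x) W_x^α / Tr[W_x^α σ^{1-α}])^{1/α} with N the normalizing trace. -/

import Mathlib

open Matrix
open scoped BigOperators ComplexOrder

noncomputable section

variable {n : Type*} [Fintype n] [DecidableEq n]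

/-- Apply a real function spectrally to a Hermitian matrix (junk value `0` otherwise). -/
def specFun (f : ℝ → ℝ) (A : Matrix n n ℂ) : Matrix n n ℂ :=
  if hA : A.IsHermitian then
    (hA.eigenvectorUnitary : Matrix n n ℂ) *
      Matrix.diagonal (fun i => ((f (hA.eigenvalues i) : ℝ) : ℂ)) *
      star (hA.eigenvectorUnitary : Matrix n n ℂ)
  else 0

/-- Spectral real power of a matrix (`0 ^ α = 0` for `α ∈ (0,1)` via `Real.rpow`). -/
def mPow (A : Matrix n n ℂ) (α : ℝ) : Matrix n n ℂ := specFun (fun x => x ^ α) A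

/-- Density matrices: positive semidefinite with unit trace. -/
def IsDensity (A : Matrix n n ℂ) : Prop := A.PosSemidef ∧ A.trace = 1

/-- The Petz Rényi divergence `D_α(ρ‖σ) = (1/(α-1)) log Tr[ρ^α σ^{1-α}]`. -/
def petzD (ρ σ : Matrix n n ℂ) (α : ℝ) : ℝ :=
  (1 / (α - 1)) * Real.log (((mPow ρ α * mPow σ (1 - α)).trace).re)

/-- The (unnormalized) fixed-point map
`σ ↦ (Σ_x P(x) W_x^α / Tr[W_x^α σ^{1-α}])^{1/α}`. -/
def fixedPtMap {d : ℕ} {X : Type*} [Fintype X] (P : X → ℝ)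
    (W : X → Matrix (Fin d) (Fin d) ℂ) (α : ℝ) (σ : Matrix (Fin d) (Fin d) ℂ) :
    Matrix (Fin d) (Fin d) ℂ :=
  mPow (∑ x, (((P x / ((mPow (W x) α * mPow σ (1 - α)).trace).re) : ℝ) : ℂ) •
    mPow (W x) α) (1 / α)


lemma specFun_eq_cfc (f : ℝ → ℝ) {A : Matrix n n ℂ} (hA : A.IsHermitian) :
    specFun f A = cfc f A := by
  rw [hA.cfc_eq, specFun, dif_pos hA]
  simp [Matrix.IsHermitian.cfc, Unitary.conjStarAlgAut_apply, Function.comp_def]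

lemma mcont (f : ℝ → ℝ) {A : Matrix n n ℂ} (hA : A.IsHermitian) (g : ℝ → ℝ) :
    ContinuousOn f (g '' spectrum ℝ A) := by
  apply Set.Finite.continuousOn
  apply Set.Finite.image
  rw [hA.spectrum_real_eq_range_eigenvalues]
  exact Set.finite_range _

lemma mcont' (f : ℝ → ℝ) {A : Matrix n n ℂ} (hA : A.IsHermitian) :
    ContinuousOn f (spectrum ℝ A) := by
  simpa using mcont f hA id

lemma spec_nonneg {A : Matrix n n ℂ} (hA : A.PosSemidef) {x : ℝ} (hx : x ∈ spectrum ℝ A) :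
    0 ≤ x := by
  rw [hA.isHermitian.spectrum_real_eq_range_eigenvalues] at hx
  obtain ⟨i, rfl⟩ := hx
  exact hA.eigenvalues_nonneg i

lemma mPow_posSemidef {A : Matrix n n ℂ} (hA : A.PosSemidef) (s : ℝ) :
    (mPow A s).PosSemidef := by
  rw [mPow, specFun, dif_pos hA.isHermitian]
  apply Matrix.PosSemidef.mul_mul_conjTranspose_same
  apply Matrix.PosSemidef.diagonal
  intro i
  simp only [Pi.zero_apply, Complex.zero_le_real]
  exact Real.rpow_nonneg (hA.eigenvalues_nonneg i) _

lemma mPow_posDef {A : Matrix n n ℂ} (hA : A.PosDef) (s : ℝ) :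
    (mPow A s).PosDef := by
  rw [mPow, specFun, dif_pos hA.isHermitian]
  have hU : IsUnit (hA.isHermitian.eigenvectorUnitary : Matrix n n ℂ) :=
    (Unitary.toUnits hA.isHermitian.eigenvectorUnitary).isUnit
  rw [Matrix.IsUnit.posDef_star_right_conjugate_iff hU]
  apply Matrix.PosDef.diagonal
  intro i
  simp only [Complex.zero_lt_real]
  exact Real.rpow_pos_of_pos (hA.eigenvalues_pos i) _

lemma mPow_mPow {A : Matrix n n ℂ} (hA : A.PosSemidef) (s t : ℝ) :
    mPow (mPow A s) t = mPow A (s * t) := by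
  have h1 := (mPow_posSemidef hA s).isHermitian
  have hs : IsSelfAdjoint A := hA.isHermitian
  rw [mPow, specFun_eq_cfc _ h1, mPow, specFun_eq_cfc _ hA.isHermitian, mPow,
    specFun_eq_cfc _ hA.isHermitian, ← cfc_comp' _ _ A (mcont _ hA.isHermitian _)
      (mcont' _ hA.isHermitian) hs]
  apply cfc_congr
  intro x hx
  exact (Real.rpow_mul (spec_nonneg hA hx) s t).symm

lemma mPow_one {A : Matrix n n ℂ} (hA : A.PosSemidef) : mPow A 1 = A := by
  have hs : IsSelfAdjoint A := hA.isHermitian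
  rw [mPow, specFun_eq_cfc _ hA.isHermitian]
  simp only [Real.rpow_one]
  exact cfc_id' ℝ A hs

lemma mPow_mul {A : Matrix n n ℂ} (hA : A.PosSemidef) {s t : ℝ} (hs : 0 < s) (ht : 0 < t) :
    mPow A s * mPow A t = mPow A (s + t) := by
  rw [mPow, mPow, mPow, specFun_eq_cfc _ hA.isHermitian, specFun_eq_cfc _ hA.isHermitian,
    specFun_eq_cfc _ hA.isHermitian, ← cfc_mul _ _ A (mcont' _ hA.isHermitian)
      (mcont' _ hA.isHermitian)]
  apply cfc_congr
  intro x hx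
  exact (Real.rpow_add_of_nonneg (spec_nonneg hA hx) hs.le ht.le).symm

lemma smul_posSemidef {A : Matrix n n ℂ} (hA : A.PosSemidef) {c : ℝ} (hc : 0 ≤ c) :
    ((c : ℂ) • A).PosSemidef := by
  apply hA.smul
  simpa using hc

lemma mPow_smul {A : Matrix n n ℂ} (hA : A.PosSemidef) {c : ℝ} (hc : 0 ≤ c) (s : ℝ) :
    mPow ((c : ℂ) • A) s = ((c ^ s : ℝ) : ℂ) • mPow A s := by
  have h1 := (smul_posSemidef hA hc).isHermitian
  have hs : IsSelfAdjoint A := hA.isHermitian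
  rw [mPow, specFun_eq_cfc _ h1, mPow, specFun_eq_cfc _ hA.isHermitian]
  rw [Complex.coe_smul, Complex.coe_smul, ← cfc_const_mul _ _ A (mcont' _ hA.isHermitian),
    ← cfc_comp_const_mul c _ A (mcont _ hA.isHermitian _) hs]
  apply cfc_congr
  intro x hx
  exact Real.mul_rpow hc (spec_nonneg hA hx)

/-- Overlap weights of the eigenbases. -/
def overlap {A B : Matrix n n ℂ} (hA : A.IsHermitian) (hB : B.IsHermitian) : Matrix n n ℂ :=
  star (hA.eigenvectorUnitary : Matrix n n ℂ) * (hB.eigenvectorUnitary : Matrix n n ℂ)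

lemma trace_spec {A B : Matrix n n ℂ} (hA : A.IsHermitian) (hB : B.IsHermitian) (f g : ℝ → ℝ) :
    ((specFun f A * specFun g B).trace).re =
      ∑ i, ∑ j, Complex.normSq (overlap hA hB i j) *
        (f (hA.eigenvalues i) * g (hB.eigenvalues j)) := by
  rw [specFun, dif_pos hA, specFun, dif_pos hB]
  have : ((hA.eigenvectorUnitary : Matrix n n ℂ) *
      Matrix.diagonal (fun i => ((f (hA.eigenvalues i) : ℝ) : ℂ)) *
      star (hA.eigenvectorUnitary : Matrix n n ℂ) * ((hB.eigenvectorUnitary : Matrix n n ℂ) *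
      Matrix.diagonal (fun i => ((g (hB.eigenvalues i) : ℝ) : ℂ)) *
      star (hB.eigenvectorUnitary : Matrix n n ℂ))).trace =
      (Matrix.diagonal (fun i => ((f (hA.eigenvalues i) : ℝ) : ℂ)) * overlap hA hB *
      (Matrix.diagonal (fun i => ((g (hB.eigenvalues i) : ℝ) : ℂ)) * star (overlap hA hB))).trace := by
    rw [overlap, star_mul, star_star]
    simp only [Matrix.mul_assoc]
    rw [Matrix.trace_mul_comm]
    simp only [Matrix.mul_assoc]
  rw [this, Matrix.trace, Complex.re_sum]
  refine Finset.sum_congr rfl fun i _ => ?_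
  rw [Matrix.diag_apply, Matrix.mul_apply, Complex.re_sum]
  refine Finset.sum_congr rfl fun j _ => ?_
  rw [Matrix.diagonal_mul, Matrix.diagonal_mul, Matrix.star_apply]
  simp [Complex.normSq_apply]
  ring

lemma specFun_id {A : Matrix n n ℂ} (hA : A.IsHermitian) : specFun (fun x => x) A = A := by
  rw [specFun_eq_cfc _ hA]
  exact cfc_id' ℝ A hA

lemma specFun_one {A : Matrix n n ℂ} (hA : A.IsHermitian) : specFun (fun _ => 1) A = 1 := by
  rw [specFun, dif_pos hA]
  simp

lemma eq_of_overlap {A B : Matrix n n ℂ} (hA : A.IsHermitian) (hB : B.IsHermitian)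
    (h : ∀ i j, overlap hA hB i j ≠ 0 → hA.eigenvalues i = hB.eigenvalues j) : A = B := by
  have key : Matrix.diagonal (fun i => ((hA.eigenvalues i : ℝ) : ℂ)) * overlap hA hB =
      overlap hA hB * Matrix.diagonal (fun i => ((hB.eigenvalues i : ℝ) : ℂ)) := by
    ext i j
    rw [Matrix.diagonal_mul, Matrix.mul_diagonal]
    by_cases h0 : overlap hA hB i j = 0
    · simp [h0]
    · rw [h i j h0, mul_comm]
  have e1 := specFun_id hA
  have e2 := specFun_id hB
  rw [specFun, dif_pos hA] at e1
  rw [specFun, dif_pos hB] at e2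
  have hU : (hA.eigenvectorUnitary : Matrix n n ℂ) * star (hA.eigenvectorUnitary : Matrix n n ℂ) = 1 :=
    Unitary.coe_mul_star_self _
  have hV : (hB.eigenvectorUnitary : Matrix n n ℂ) * star (hB.eigenvectorUnitary : Matrix n n ℂ) = 1 :=
    Unitary.coe_mul_star_self _
  have h3 := congrArg (fun Z => (hA.eigenvectorUnitary : Matrix n n ℂ) * Z *
    star (hB.eigenvectorUnitary : Matrix n n ℂ)) key
  simp only [overlap] at h3
  rw [← e1, ← e2]
  calc _ = (hA.eigenvectorUnitary : Matrix n n ℂ) *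
      Matrix.diagonal (fun i => ((hA.eigenvalues i : ℝ) : ℂ)) *
      star (hA.eigenvectorUnitary : Matrix n n ℂ) * ((hB.eigenvectorUnitary : Matrix n n ℂ) *
        star (hB.eigenvectorUnitary : Matrix n n ℂ)) := by rw [hV, mul_one]
    _ = (hA.eigenvectorUnitary : Matrix n n ℂ) * star (hA.eigenvectorUnitary : Matrix n n ℂ) *
      (hB.eigenvectorUnitary : Matrix n n ℂ) *
      Matrix.diagonal (fun i => ((hB.eigenvalues i : ℝ) : ℂ)) *
      star (hB.eigenvectorUnitary : Matrix n n ℂ) := by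
        simpa only [Matrix.mul_assoc] using h3
    _ = _ := by rw [hU, one_mul]

lemma young_gap {A B : Matrix n n ℂ} (hA : IsDensity A) (hB : IsDensity B) (α : ℝ) :
    1 - ((mPow A α * mPow B (1 - α)).trace).re =
      ∑ i, ∑ j, Complex.normSq (overlap hA.1.isHermitian hB.1.isHermitian i j) *
        (α * hA.1.isHermitian.eigenvalues i + (1 - α) * hB.1.isHermitian.eigenvalues j -
        hA.1.isHermitian.eigenvalues i ^ α * hB.1.isHermitian.eigenvalues j ^ (1 - α)) := by
  have a1 := trace_spec hA.1.isHermitian hB.1.isHermitian (fun x => x) (fun _ => 1)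
  have a2 := trace_spec hA.1.isHermitian hB.1.isHermitian (fun _ => 1) (fun x => x)
  have a3 := trace_spec hA.1.isHermitian hB.1.isHermitian (fun x => x ^ α) (fun x => x ^ (1 - α))
  have t1 : A.trace.re = 1 := by rw [hA.2, Complex.one_re]
  have t2 : B.trace.re = 1 := by rw [hB.2, Complex.one_re]
  rw [specFun_id hA.1.isHermitian, specFun_one hB.1.isHermitian, mul_one, t1] at a1
  rw [specFun_id hB.1.isHermitian, specFun_one hA.1.isHermitian, one_mul, t2] at a2
  refine Eq.trans (?_ : _ = α * (∑ i, ∑ j,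
      Complex.normSq (overlap hA.1.isHermitian hB.1.isHermitian i j) *
        (hA.1.isHermitian.eigenvalues i * 1)) + (1 - α) * (∑ i, ∑ j,
      Complex.normSq (overlap hA.1.isHermitian hB.1.isHermitian i j) *
        (1 * hB.1.isHermitian.eigenvalues j)) - ∑ i, ∑ j,
      Complex.normSq (overlap hA.1.isHermitian hB.1.isHermitian i j) *
        (hA.1.isHermitian.eigenvalues i ^ α * hB.1.isHermitian.eigenvalues j ^ (1 - α))) ?_
  · rw [← a1, ← a2, ← a3, mPow, mPow]
    ring
  simp only [Finset.mul_sum, ← Finset.sum_add_distrib, ← Finset.sum_sub_distrib]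
  refine Finset.sum_congr rfl fun i _ => Finset.sum_congr rfl fun j _ => ?_
  ring

lemma young_le {A B : Matrix n n ℂ} (hA : IsDensity A) (hB : IsDensity B) {α : ℝ}
    (hα : α ∈ Set.Ioo (0 : ℝ) 1) : ((mPow A α * mPow B (1 - α)).trace).re ≤ 1 := by
  have h := young_gap hA hB α
  have : 0 ≤ 1 - ((mPow A α * mPow B (1 - α)).trace).re := by
    rw [h]
    refine Finset.sum_nonneg fun i _ => Finset.sum_nonneg fun j _ => ?_
    refine mul_nonneg (Complex.normSq_nonneg _) (sub_nonneg.2 ?_)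
    exact Real.geom_mean_le_arith_mean2_weighted hα.1.le (by linarith [hα.2])
      (hA.1.eigenvalues_nonneg i) (hB.1.eigenvalues_nonneg j) (by ring)
  linarith

lemma young_eq {A B : Matrix n n ℂ} (hA : IsDensity A) (hB : IsDensity B) {α : ℝ}
    (hα : α ∈ Set.Ioo (0 : ℝ) 1) (he : 1 ≤ ((mPow A α * mPow B (1 - α)).trace).re) : A = B := by
  have h := young_gap hA hB α
  have hnn : ∀ i j, 0 ≤ Complex.normSq (overlap hA.1.isHermitian hB.1.isHermitian i j) *
        (α * hA.1.isHermitian.eigenvalues i + (1 - α) * hB.1.isHermitian.eigenvalues j -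
        hA.1.isHermitian.eigenvalues i ^ α * hB.1.isHermitian.eigenvalues j ^ (1 - α)) := by
    intro i j
    refine mul_nonneg (Complex.normSq_nonneg _) (sub_nonneg.2 ?_)
    exact Real.geom_mean_le_arith_mean2_weighted hα.1.le (by linarith [hα.2])
      (hA.1.eigenvalues_nonneg i) (hB.1.eigenvalues_nonneg j) (by ring)
  have h0 : ((mPow A α * mPow B (1 - α)).trace).re = 1 := le_antisymm (young_le hA hB hα) he
  rw [h0, sub_self, eq_comm, Finset.sum_eq_zero_iff_of_nonneg
    (fun i _ => Finset.sum_nonneg fun j _ => hnn i j)] at h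
  apply eq_of_overlap hA.1.isHermitian hB.1.isHermitian
  intro i j hij
  have h1 := h i (Finset.mem_univ _)
  rw [Finset.sum_eq_zero_iff_of_nonneg (fun j _ => hnn i j)] at h1
  have h2 := h1 j (Finset.mem_univ _)
  rcases mul_eq_zero.1 h2 with h3 | h3
  · exact absurd (Complex.normSq_eq_zero.1 h3) hij
  · exact (Real.geom_mean_eq_arith_mean2_weighted_iff_of_pos hα.1 (by linarith [hα.2])
      (hA.1.eigenvalues_nonneg i) (hB.1.eigenvalues_nonneg j) (by ring)).1 (sub_eq_zero.1 h3).symm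

lemma trace_mul_pos {A B : Matrix n n ℂ} (hA : A.PosDef) (hB : B.PosSemidef) (h0 : B ≠ 0) :
    0 < ((A * B).trace).re := by
  obtain ⟨i0, hi0⟩ : ∃ i, hB.isHermitian.eigenvalues i ≠ 0 := by
    by_contra hc
    push Not at hc
    exact h0 (hB.isHermitian.eigenvalues_eq_zero_iff.1 (funext hc))
  have e := specFun_id hB.isHermitian
  rw [specFun, dif_pos hB.isHermitian] at e
  set V := (hB.isHermitian.eigenvectorUnitary : Matrix n n ℂ) with hV
  have hU : IsUnit V := (Unitary.toUnits hB.isHermitian.eigenvectorUnitary).isUnit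
  have hC : (star V * A * V).PosDef := (Matrix.IsUnit.posDef_star_left_conjugate_iff hU).2 hA
  have : (A * B).trace = ((star V * A * V) *
      Matrix.diagonal (fun i => ((hB.isHermitian.eigenvalues i : ℝ) : ℂ))).trace := by
    nth_rewrite 1 [← e]
    rw [← Matrix.mul_assoc, Matrix.trace_mul_comm]
    simp only [Matrix.mul_assoc]
  rw [this, Matrix.trace, Complex.re_sum]
  have hd : ∀ i, 0 < ((star V * A * V) i i).re := fun i => (Complex.pos_iff.1 hC.diag_pos).1
  apply Finset.sum_pos'
  · intro i _
    rw [Matrix.diag_apply, Matrix.mul_diagonal, Complex.re_mul_ofReal]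
    exact mul_nonneg (hd i).le (hB.eigenvalues_nonneg i)
  · refine ⟨i0, Finset.mem_univ _, ?_⟩
    rw [Matrix.diag_apply, Matrix.mul_diagonal, Complex.re_mul_ofReal]
    exact mul_pos (hd i0) (lt_of_le_of_ne (hB.eigenvalues_nonneg i0) (Ne.symm hi0))

lemma psd_trace_re {A : Matrix n n ℂ} (hA : A.PosSemidef) : A.trace = ((A.trace.re : ℝ) : ℂ) := by
  have := hA.trace_nonneg
  rw [Complex.nonneg_iff] at this
  apply Complex.ext <;> simp [← this.2]

lemma psd_trace_nonneg {A : Matrix n n ℂ} (hA : A.PosSemidef) : 0 ≤ A.trace.re :=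
  (Complex.nonneg_iff.1 hA.trace_nonneg).1

lemma psd_trace_pos {A : Matrix n n ℂ} (hA : A.PosSemidef) (h : A ≠ 0) : 0 < A.trace.re := by
  refine lt_of_le_of_ne (psd_trace_nonneg hA) fun h0 => h ?_
  rw [← hA.trace_eq_zero_iff, psd_trace_re hA, ← h0, Complex.ofReal_zero]

lemma normalize_density {A : Matrix n n ℂ} (hA : A.PosSemidef) (h : A ≠ 0) :
    IsDensity (((A.trace.re)⁻¹ : ℝ) • A : Matrix n n ℂ) := by
  have hp := psd_trace_pos hA h
  refine ⟨?_, ?_⟩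
  · have := smul_posSemidef hA (inv_nonneg.2 hp.le)
    rwa [Complex.coe_smul] at this
  · rw [Matrix.trace_smul]
    nth_rewrite 2 [psd_trace_re hA]
    rw [Complex.real_smul, ← Complex.ofReal_mul, inv_mul_cancel₀ hp.ne', Complex.ofReal_one]

lemma mPow_ne_zero {A : Matrix n n ℂ} (hA : A.PosSemidef) (h : A ≠ 0) {s : ℝ} (hs : 0 < s) :
    mPow A s ≠ 0 := by
  intro h0
  apply h
  have h1 := mPow_mPow hA s s⁻¹
  rw [h0, mul_inv_cancel₀ hs.ne', mPow_one hA] at h1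
  rw [← h1]
  have := mPow_smul (Matrix.PosSemidef.zero : (0 : Matrix n n ℂ).PosSemidef) (le_refl 0) s⁻¹
  rwa [Real.zero_rpow (inv_pos.2 hs).ne', Complex.ofReal_zero, zero_smul, zero_smul] at this


lemma mix_density {σ φ : Matrix n n ℂ} (hσ : IsDensity σ) (hφ : IsDensity φ) {α : ℝ}
    (hα : α ∈ Set.Ioo (0 : ℝ) 1) {t : ℝ} (ht : t ∈ Set.Ioo (0 : ℝ) 1) :
    ∃ τ : Matrix n n ℂ, IsDensity τ ∧ ∃ z : ℝ, 1 ≤ z ∧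
      mPow τ (1 - α) = (z : ℂ) • (((1 - t : ℝ) : ℂ) • mPow σ (1 - α) + (t : ℂ) • mPow φ (1 - α)) := by
  have hα1 : 0 < 1 - α := by linarith [hα.2]
  have ht1 : 0 < 1 - t := by linarith [ht.2]
  have hσ0 : σ ≠ 0 := by
    rintro rfl
    simpa using hσ.2
  have hsp := mPow_posSemidef hσ.1 (1 - α)
  have hfp := mPow_posSemidef hφ.1 (1 - α)
  set B := ((1 - t : ℝ) : ℂ) • mPow σ (1 - α) + (t : ℂ) • mPow φ (1 - α) with hB
  have hBp : B.PosSemidef := (smul_posSemidef hsp ht1.le).add (smul_posSemidef hfp ht.1.le)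
  have hB0 : B ≠ 0 := by
    intro h0
    have h1 : B.trace.re = 0 := by simp [h0]
    rw [hB, Matrix.trace_add, Matrix.trace_smul, Matrix.trace_smul, Complex.add_re, smul_eq_mul,
      smul_eq_mul, Complex.re_ofReal_mul, Complex.re_ofReal_mul] at h1
    have h2 := mul_pos ht1 (psd_trace_pos hsp (mPow_ne_zero hσ.1 hσ0 hα1))
    have h3 := mul_nonneg ht.1.le (psd_trace_nonneg hfp)
    linarith
  have hH := mPow_posSemidef hBp (1 - α)⁻¹
  have hH0 := mPow_ne_zero hBp hB0 (inv_pos.2 hα1)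
  have hd := normalize_density hH hH0
  have hZ := psd_trace_pos hH hH0
  set τ : Matrix n n ℂ := ((mPow B (1 - α)⁻¹).trace.re)⁻¹ • mPow B (1 - α)⁻¹ with hτ
  have hz0 : 0 ≤ (((mPow B (1 - α)⁻¹).trace.re)⁻¹) ^ (1 - α) :=
    Real.rpow_nonneg (inv_nonneg.2 hZ.le) _
  set z := (((mPow B (1 - α)⁻¹).trace.re)⁻¹) ^ (1 - α) with hz
  have hpow : mPow τ (1 - α) = (z : ℂ) • B := by
    rw [hτ, ← Complex.coe_smul, mPow_smul hH (inv_nonneg.2 hZ.le), mPow_mPow hBp,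
      inv_mul_cancel₀ hα1.ne', mPow_one hBp]
  refine ⟨τ, hd, z, ?_, hpow⟩
  have e1 : (mPow τ α * mPow τ (1 - α)).trace.re = 1 := by
    rw [mPow_mul hd.1 hα.1 hα1, add_sub_cancel, mPow_one hd.1, hd.2, Complex.one_re]
  have y1 := young_le hd hσ hα
  have y2 := young_le hd hφ hα
  rw [hpow, hB, Matrix.mul_smul, Matrix.trace_smul, smul_eq_mul, Complex.re_ofReal_mul,
    Matrix.mul_add, Matrix.mul_smul, Matrix.mul_smul, Matrix.trace_add, Matrix.trace_smul,
    Matrix.trace_smul, Complex.add_re, smul_eq_mul, smul_eq_mul, Complex.re_ofReal_mul,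
    Complex.re_ofReal_mul] at e1
  have h4 : (1 - t) * (mPow τ α * mPow σ (1 - α)).trace.re +
      t * (mPow τ α * mPow φ (1 - α)).trace.re ≤ 1 := by
    nlinarith [mul_le_mul_of_nonneg_left y1 ht1.le, mul_le_mul_of_nonneg_left y2 ht.1.le]
  nlinarith [mul_le_mul_of_nonneg_left h4 hz0]

lemma deriv_bound {X : Type*} [Fintype X] (P r : X → ℝ) (hP0 : ∀ x, 0 ≤ P x)
    (hr : ∀ x, 0 < r x)
    (h : ∀ t ∈ Set.Ioo (0 : ℝ) 1, ∑ x, P x * Real.log (1 + t * (r x - 1)) ≤ 0) :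
    ∑ x, P x * (r x - 1) ≤ 0 := by
  have hlim : Filter.Tendsto (fun t : ℝ => ∑ x, P x * ((r x - 1) / (1 + t * (r x - 1))))
      (nhdsWithin 0 (Set.Ioi 0)) (nhds (∑ x, P x * (r x - 1))) := by
    apply Filter.Tendsto.mono_left _ nhdsWithin_le_nhds
    apply tendsto_finsetSum
    intro x _
    have : ContinuousAt (fun t : ℝ => P x * ((r x - 1) / (1 + t * (r x - 1)))) 0 := by
      apply ContinuousAt.mul continuousAt_const
      apply ContinuousAt.div continuousAt_const (by fun_prop)
      simp
    simpa [ContinuousAt] using this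
  refine le_of_tendsto hlim ?_
  filter_upwards [Ioo_mem_nhdsGT (show (0 : ℝ) < 1 by norm_num)] with t ht
  have h1 := h t ht
  have h2 : t * ∑ x, P x * ((r x - 1) / (1 + t * (r x - 1))) ≤
      ∑ x, P x * Real.log (1 + t * (r x - 1)) := by
    rw [Finset.mul_sum]
    refine Finset.sum_le_sum fun x _ => ?_
    have hy : 0 < 1 + t * (r x - 1) := by nlinarith [mul_pos ht.1 (hr x), ht.2]
    have hl := Real.one_sub_inv_le_log_of_pos hy
    have he : t * (P x * ((r x - 1) / (1 + t * (r x - 1)))) =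
        P x * (1 - (1 + t * (r x - 1))⁻¹) := by
      field_simp
      ring
    rw [he]
    exact mul_le_mul_of_nonneg_left hl (hP0 x)
  by_contra hc
  push Not at hc
  nlinarith [mul_pos ht.1 hc]

/-- Fixed-point characterization of the Rényi-divergence minimizer: a density matrix `σ`
minimizes `σ ↦ Σ_x P(x) D_α(W_x‖σ)` over all density matrices iff
`σ = N⁻¹ (Σ_x P(x) W_x^α / Tr[W_x^α σ^{1-α}])^{1/α}` with `N` the normalizing trace. -/
theorem renyi_minimizer_fixed_point {d : ℕ} {X : Type*} [Fintype X]
    (α : ℝ) (hα : α ∈ Set.Ioo (0 : ℝ) 1)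
    (P : X → ℝ) (hP0 : ∀ x, 0 ≤ P x) (hP1 : ∑ x, P x = 1)
    (W : X → Matrix (Fin d) (Fin d) ℂ)
    (hWpd : ∀ x, (W x).PosDef) (hW1 : ∀ x, (W x).trace = 1)
    (σ : Matrix (Fin d) (Fin d) ℂ) (hσ : IsDensity σ) :
    (∀ τ : Matrix (Fin d) (Fin d) ℂ, IsDensity τ →
        (∑ x, P x * petzD (W x) σ α) ≤ ∑ x, P x * petzD (W x) τ α) ↔
      σ = ((((fixedPtMap P W α σ).trace).re : ℂ))⁻¹ • fixedPtMap P W α σ := by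
  classical
  have hα0 := hα.1
  have hα1 : 0 < 1 - α := by linarith [hα.2]
  have hT : ∀ τ : Matrix (Fin d) (Fin d) ℂ, IsDensity τ → ∀ x,
      0 < ((mPow (W x) α * mPow τ (1 - α)).trace).re := by
    intro τ hτ x
    refine trace_mul_pos (mPow_posDef (hWpd x) α) (mPow_posSemidef hτ.1 _) ?_
    refine mPow_ne_zero hτ.1 ?_ hα1
    rintro rfl
    simpa using hτ.2
  have hobj : ∀ τ : Matrix (Fin d) (Fin d) ℂ,
      ((∑ x, P x * petzD (W x) σ α) ≤ ∑ x, P x * petzD (W x) τ α) ↔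
      ∑ x, P x * Real.log (((mPow (W x) α * mPow τ (1 - α)).trace).re) ≤
      ∑ x, P x * Real.log (((mPow (W x) α * mPow σ (1 - α)).trace).re) := by
    intro τ
    have e : ∀ τ : Matrix (Fin d) (Fin d) ℂ, ∑ x, P x * petzD (W x) τ α =
        (1 / (α - 1)) * ∑ x, P x * Real.log (((mPow (W x) α * mPow τ (1 - α)).trace).re) := by
      intro τ
      rw [Finset.mul_sum]
      refine Finset.sum_congr rfl fun x _ => ?_
      rw [petzD]
      ring
    rw [e, e]
    exact mul_le_mul_left_of_neg (one_div_neg.2 (by linarith))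
  simp only [hobj]
  set F : Matrix (Fin d) (Fin d) ℂ :=
    ∑ x, (((P x / ((mPow (W x) α * mPow σ (1 - α)).trace).re) : ℝ) : ℂ) • mPow (W x) α with hF
  have hFp : F.PosSemidef := by
    rw [hF]
    refine Matrix.posSemidef_sum _ fun x _ => ?_
    exact smul_posSemidef (mPow_posDef (hWpd x) α).posSemidef (div_nonneg (hP0 x) (hT σ hσ x).le)
  have hFtr : ∀ B : Matrix (Fin d) (Fin d) ℂ, (F * B).trace.re =
      ∑ x, P x * (((mPow (W x) α * B).trace).re / ((mPow (W x) α * mPow σ (1 - α)).trace).re) := by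
    intro B
    rw [hF, Finset.sum_mul, Matrix.trace_sum, Complex.re_sum]
    refine Finset.sum_congr rfl fun x _ => ?_
    rw [Matrix.smul_mul, Matrix.trace_smul, smul_eq_mul, Complex.re_ofReal_mul]
    ring
  have hF1 : (F * mPow σ (1 - α)).trace.re = 1 := by
    rw [hFtr]
    refine Eq.trans (Finset.sum_congr rfl fun x _ => ?_) hP1
    rw [div_self (hT σ hσ x).ne', mul_one]
  have hfm : fixedPtMap P W α σ = mPow F (1 / α) := rfl
  rw [hfm]
  have hGp := mPow_posSemidef hFp (1 / α)
  have hGF : mPow (mPow F (1 / α)) α = F := by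
    rw [mPow_mPow hFp, one_div_mul_cancel hα0.ne', mPow_one hFp]
  set G := mPow F (1 / α) with hG
  have hN0 := psd_trace_nonneg hGp
  set N := G.trace.re with hN
  -- the normalized fixed-point image
  have hFφ : ∀ φ : Matrix (Fin d) (Fin d) ℂ, IsDensity φ → 0 < N → φ = (N : ℂ)⁻¹ • G →
      F = ((N ^ α : ℝ) : ℂ) • mPow φ α := by
    intro φ hφ hNp h
    have : G = (N : ℂ) • φ := by
      rw [h, smul_smul, mul_inv_cancel₀ (by exact_mod_cast hNp.ne'), one_smul]
    rw [← mPow_smul hφ.1 hN0, ← this, hGF]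
  have htr : ∀ (c : ℝ) (φ B : Matrix (Fin d) (Fin d) ℂ), (((c : ℂ) • φ) * B).trace.re =
      c * (φ * B).trace.re := by
    intro c φ B
    rw [Matrix.smul_mul, Matrix.trace_smul, smul_eq_mul, Complex.re_ofReal_mul]
  have hself : ∀ φ : Matrix (Fin d) (Fin d) ℂ, IsDensity φ →
      (mPow φ α * mPow φ (1 - α)).trace.re = 1 := by
    intro φ hφ
    rw [mPow_mul hφ.1 hα0 hα1, add_sub_cancel, mPow_one hφ.1, hφ.2, Complex.one_re]
  constructor
  · intro hmin
    have hF0 : F ≠ 0 := by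
      intro h
      rw [h] at hF1
      simp at hF1
    have hG0 : G ≠ 0 := mPow_ne_zero hFp hF0 (one_div_pos.2 hα0)
    have hNp : 0 < N := psd_trace_pos hGp hG0
    have hφ := normalize_density hGp hG0
    have hφe : ((G.trace.re)⁻¹ : ℝ) • G = (N : ℂ)⁻¹ • G := by
      rw [← Complex.coe_smul, Complex.ofReal_inv]
    rw [hφe] at hφ
    have hFe := hFφ _ hφ hNp rfl
    set φ := (N : ℂ)⁻¹ • G with hφdef
    have hr := deriv_bound P (fun x => ((mPow (W x) α * mPow φ (1 - α)).trace).re /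
      ((mPow (W x) α * mPow σ (1 - α)).trace).re) hP0
      (fun x => div_pos (hT φ hφ x) (hT σ hσ x)) ?_
    · simp only [mul_sub, mul_one, Finset.sum_sub_distrib, hP1] at hr
      rw [← hFtr, hFe, htr, hself φ hφ, mul_one] at hr
      rw [hFe, htr] at hF1
      have hpos : 0 < N ^ α := Real.rpow_pos_of_pos hNp _
      refine (young_eq hφ hσ hα ?_).symm
      by_contra hc
      push Not at hc
      nlinarith [mul_lt_mul_of_pos_left hc hpos]
    · intro t ht
      obtain ⟨τ, hτ, z, hz, hpow⟩ := mix_density hσ hφ hα ht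
      have hm := hmin τ hτ
      rw [← sub_nonpos, ← Finset.sum_sub_distrib] at hm
      refine le_trans (Finset.sum_le_sum fun x _ => ?_) hm
      rw [← mul_sub]
      refine mul_le_mul_of_nonneg_left ?_ (hP0 x)
      have hs := hT σ hσ x
      have hf := hT φ hφ x
      rw [← Real.log_div (hT τ hτ x).ne' hs.ne']
      have e : ((mPow (W x) α * mPow τ (1 - α)).trace).re = z *
          ((1 - t) * ((mPow (W x) α * mPow σ (1 - α)).trace).re +
          t * ((mPow (W x) α * mPow φ (1 - α)).trace).re) := by
        rw [hpow, Matrix.mul_smul, Matrix.trace_smul, smul_eq_mul, Complex.re_ofReal_mul,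
          Matrix.mul_add, Matrix.mul_smul, Matrix.mul_smul, Matrix.trace_add, Matrix.trace_smul,
          Matrix.trace_smul, Complex.add_re, smul_eq_mul, smul_eq_mul, Complex.re_ofReal_mul,
          Complex.re_ofReal_mul]
      rw [e]
      have ht1 : 0 < 1 - t := by linarith [ht.2]
      have hq : 1 + t * (((mPow (W x) α * mPow φ (1 - α)).trace).re /
          ((mPow (W x) α * mPow σ (1 - α)).trace).re - 1) =
          ((1 - t) * ((mPow (W x) α * mPow σ (1 - α)).trace).re +
          t * ((mPow (W x) α * mPow φ (1 - α)).trace).re) /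
          ((mPow (W x) α * mPow σ (1 - α)).trace).re := by
        field_simp
        ring
      have hpos := add_pos (mul_pos ht1 hs) (mul_pos ht.1 hf)
      rw [hq]
      apply Real.log_le_log (div_pos hpos hs)
      gcongr
      nlinarith
  · intro hfix τ hτ
    have hNp : 0 < N := by
      refine lt_of_le_of_ne hN0 fun h => ?_
      rw [← h] at hfix
      have h2 := hσ.2
      rw [hfix] at h2
      simp at h2
    have hFe := hFφ σ hσ hNp hfix
    have hN1 := hF1
    rw [hFe, htr, hself σ hσ, mul_one] at hN1
    rw [hN1, Complex.ofReal_one, one_smul] at hFe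
    have hy := young_le hσ hτ hα
    rw [← hFe, hFtr] at hy
    rw [← sub_nonpos, ← Finset.sum_sub_distrib]
    calc _ ≤ ∑ x, P x * (((mPow (W x) α * mPow τ (1 - α)).trace).re /
          ((mPow (W x) α * mPow σ (1 - α)).trace).re - 1) := by
          refine Finset.sum_le_sum fun x _ => ?_
          rw [← mul_sub, ← Real.log_div (hT τ hτ x).ne' (hT σ hσ x).ne']
          exact mul_le_mul_of_nonneg_left
            (Real.log_le_sub_one_of_pos (div_pos (hT τ hτ x) (hT σ hσ x))) (hP0 x)
      _ ≤ 0 := by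
          simp only [mul_sub, mul_one, Finset.sum_sub_distrib, hP1]
          linarith

end
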